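/- Let R be a commutative ring with identity and M a finitely generated R-module. Then M is a zero-dimensional coprimely structured module if and only if M is a strongly 0-dimensional module. -/

import Mathlib

universe v

/-- A submodule `P` of an `R`-module `M` is prime if `P ≠ M` and whenever `r • m ∈ P`,
either `m ∈ P` or `r • M ⊆ P`. -/
def IsPrimeSubmodule {R M : Type*} [CommRing R] [AddCommGroup M] [Module R M]
    (P : Submodule R M) : Prop :=
  P ≠ ⊤ ∧ ∀ (r : R) (m : M), r • m ∈ P → m ∈ P ∨ ∀ x : M, r • x ∈ P

/-- The defining condition for a (prime) submodule `P` to be coprimely structured: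
for every family `{N_i}` of submodules with `N_i + P = M` for all `i`,
the intersection `⋂ N_i` is not contained in `P`. -/
def CoprimelyStructuredAt {R M : Type*} [CommRing R] [AddCommGroup M] [Module R M]
    (P : Submodule R M) : Prop :=
  ∀ (ι : Type*) (N : ι → Submodule R M), (∀ i, N i ⊔ P = ⊤) → ¬ (⨅ i, N i) ≤ P

/-- `M` is a coprimely structured `R`-module if every prime submodule is coprimely
structured. -/
def CoprimelyStructured (R M : Type*) [CommRing R] [AddCommGroup M] [Module R M] : Prop :=
  ∀ P : Submodule R M, IsPrimeSubmodule P → CoprimelyStructuredAt.{_, _, v} P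

/-- The defining condition for a (prime) submodule `P` to be strongly prime: for every
family `{N_i}` of submodules with `⋂ N_i ⊆ P`, some `N_j ⊆ P`. -/
def StronglyPrimeAt {R M : Type*} [CommRing R] [AddCommGroup M] [Module R M]
    (P : Submodule R M) : Prop :=
  ∀ (ι : Type*) (N : ι → Submodule R M), (⨅ i, N i) ≤ P → ∃ j, N j ≤ P

/-- `M` is strongly 0-dimensional if every prime submodule is strongly prime. -/
def StronglyZeroDimensional (R M : Type*) [CommRing R] [AddCommGroup M] [Module R M] : Prop :=
  ∀ P : Submodule R M, IsPrimeSubmodule P → StronglyPrimeAt.{_, _, v} P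

/-- `M` is zero-dimensional if every prime submodule of `M` is a maximal submodule. -/
def ZeroDimensionalModule (R M : Type*) [CommRing R] [AddCommGroup M] [Module R M] : Prop :=
  ∀ P : Submodule R M, IsPrimeSubmodule P → IsCoatom P

/-- `M` is a multiplication `R`-module if every submodule is of the form `I • M` for
some ideal `I` of `R`. -/
def IsMultiplicationModule (R M : Type*) [CommRing R] [AddCommGroup M] [Module R M] : Prop :=
  ∀ N : Submodule R M, ∃ I : Ideal R, N = I • (⊤ : Submodule R M)

/-- The radical of a submodule `N`: the intersection of all prime submodules containing
`N` (equal to `M` if there are none). -/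
def submoduleRad {R M : Type*} [CommRing R] [AddCommGroup M] [Module R M]
    (N : Submodule R M) : Submodule R M :=
  sInf {P | IsPrimeSubmodule P ∧ N ≤ P}

/-- A family `{N_i}` of submodules of a multiplication module satisfies property (*) if
for each `x ∈ M` there is `n ∈ ℕ` such that `x ∈ rad (N_i)` implies `x ^ n ⊆ N_i`,
where `x ^ n` denotes `I ^ n • M` for an ideal `I` with `R x = I • M`. -/
def SatisfiesStar {R M ι : Type*} [CommRing R] [AddCommGroup M] [Module R M]
    (N : ι → Submodule R M) : Prop :=
  ∀ x : M, ∃ n : ℕ, ∀ i, x ∈ submoduleRad (N i) →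
    ∀ I : Ideal R, Submodule.span R {x} = I • (⊤ : Submodule R M) →
      I ^ n • (⊤ : Submodule R M) ≤ N i

/-- A proper submodule `Q` of `M` is primary if `r • m ∈ Q` and `m ∉ Q` imply
`r ∈ √(Q : M)`. -/
def IsPrimarySubmodule {R M : Type*} [CommRing R] [AddCommGroup M] [Module R M]
    (Q : Submodule R M) : Prop :=
  Q ≠ ⊤ ∧ ∀ (r : R) (m : M), r • m ∈ Q → m ∉ Q → r ∈ (Q.colon ⊤).radical

/-!
For a maximal submodule `P`, the conditions `N ⊄ P` and `N + P = M` agree, so being strongly prime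
and being coprimely structured are the same property of `P`. What has to be shown is that a
finitely generated strongly 0-dimensional module `M` is zero-dimensional, and that strong
0-dimensionality does not depend on the universe of the index types: the two sides of the theorem
quantify over families in unrelated universes.

Both rest on a minimality principle: every submonoid `S` of `R` contains some `a` such that
`a M ⊆ b M` for all `b ∈ S`. Otherwise there are `a₀, a₁, …` in `S` with `aₙ² ∣ aₙ₊₁` and
`aₙ M ⊄ aₙ₊₁ M`. The divisors of the `aₙ` form a submonoid disjoint from `(⋂ aₙ M : M)`, so some
prime submodule `Q ⊇ ⋂ aₙ M` has no `aₙ` in `(Q : M)`, and then `Q` is not strongly prime.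

Applied to the powers of `s`, with Nakayama's lemma, the principle shows that `(P : M)` is maximal
for every prime `P`, which makes `P` itself maximal. Applied to the complement of `(P : M)`, it
produces a least submodule `a M` among those not contained in `P`, and the existence of such a
submodule makes `P` strongly prime for families indexed by any universe.
-/

open Pointwise TensorProduct

universe w w'

section

variable {R M : Type*} [CommRing R] [AddCommGroup M] [Module R M] {P Q N : Submodule R M}

theorem mem_colon_univ_iff_smul_top_le {r : R} :
    r ∈ N.colon Set.univ ↔ r • (⊤ : Submodule R M) ≤ N :=
  Submodule.mem_colon_iff_le (N' := ⊤)

theorem smul_top_le_smul_top_of_dvd {a b : R} (h : a ∣ b) :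
    b • (⊤ : Submodule R M) ≤ a • ⊤ := by
  obtain ⟨c, rfl⟩ := h
  rw [mul_smul]
  exact smul_mono_right a le_top

theorem annihilator_le_colon (N : Submodule R M) (S : Set M) :
    Module.annihilator R M ≤ N.colon S := fun r hr ↦
  Submodule.mem_colon.2 fun x _ ↦ by simp [Module.mem_annihilator.1 hr x]

theorem IsPrimeSubmodule.isPrime_colon (hP : IsPrimeSubmodule P) :
    (P.colon Set.univ).IsPrime := by
  refine ⟨fun h ↦ hP.1 (top_le_iff.1 fun x _ ↦ ?_), fun {r s} hrs ↦ or_iff_not_imp_right.2 ?_⟩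
  · exact (Submodule.colon_eq_top_iff_subset _).1 h (Set.mem_univ x)
  · simp only [Submodule.mem_colon, Set.mem_univ, true_imp_iff, not_forall]
    rintro ⟨x, hx⟩
    refine (hP.2 r (s • x) ?_).resolve_left hx
    rw [← mul_smul]
    exact Submodule.mem_colon.1 hrs x trivial

theorem isPrimeSubmodule_of_isMaximal_colon (h : (P.colon Set.univ).IsMaximal) :
    IsPrimeSubmodule P := by
  refine ⟨fun hP ↦ h.ne_top (by simp [hP]), fun r m hrm ↦ or_iff_not_imp_right.2 fun hr ↦ ?_⟩
  obtain ⟨t, ht⟩ := h.exists_inv fun hr' ↦ hr fun x ↦ Submodule.mem_colon.1 hr' x trivial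
  obtain ⟨u, hu, htu⟩ := ht
  have hm : m = t • r • m + u • m := by rw [← mul_smul, ← add_smul, htu, one_smul]
  rw [hm]
  exact P.add_mem (P.smul_mem t hrm) (Submodule.mem_colon.1 hu m trivial)

theorem colon_eq_of_isMaximal_colon (h : (P.colon Set.univ).IsMaximal) (hPQ : P ≤ Q)
    (hQ : Q ≠ ⊤) : Q.colon Set.univ = P.colon Set.univ := by
  refine (h.eq_of_le (fun hQ' ↦ hQ ?_) (Submodule.colon_mono hPQ subset_rfl)).symm
  simpa using hQ'

section Kernel

variable {V : Type*} [AddCommGroup V] [Module R V] {f : M →ₗ[R] V}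

theorem isPrimeSubmodule_ker (A : Type*) [CommRing A] [IsDomain A] [Algebra R A]
    [Module A V] [IsScalarTower R A V] [Module.IsTorsionFree A V] (hf : f ≠ 0) :
    IsPrimeSubmodule (LinearMap.ker f) := by
  refine ⟨fun h ↦ hf (LinearMap.ker_eq_top.1 h), fun r m hrm ↦ ?_⟩
  rw [LinearMap.mem_ker, map_smul, algebra_compatible_smul A, smul_eq_zero] at hrm
  refine hrm.symm.imp_right fun hr x ↦ ?_
  rw [LinearMap.mem_ker, map_smul, algebra_compatible_smul A, hr, zero_smul]

theorem colon_ker (A : Type*) [CommRing A] [IsDomain A] [Algebra R A]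
    [Module A V] [IsScalarTower R A V] [Module.IsTorsionFree A V] (hf : f ≠ 0) :
    (LinearMap.ker f).colon Set.univ = RingHom.ker (algebraMap R A) := by
  obtain ⟨m, hm⟩ := DFunLike.ne_iff.1 hf
  ext r
  simp only [Submodule.mem_colon, Set.mem_univ, true_imp_iff, LinearMap.mem_ker, map_smul,
    algebra_compatible_smul A r, smul_eq_zero, RingHom.mem_ker]
  exact ⟨fun h ↦ (h m).resolve_right hm, fun h _ ↦ .inl h⟩

end Kernel

theorem tensorProduct_mk_one_ne_zero (A : Type*) [CommRing A] [Algebra R A]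
    [Nontrivial (A ⊗[R] M)] : TensorProduct.mk R A M 1 ≠ 0 := by
  intro h
  obtain ⟨z, hz⟩ := exists_ne (0 : A ⊗[R] M)
  refine hz (z.induction_on rfl (fun a x ↦ ?_) fun y z hy hz ↦ by rw [hy, hz, add_zero])
  have hx : (1 : A) ⊗ₜ[R] x = 0 := LinearMap.congr_fun h x
  rw [← mul_one a, ← smul_eq_mul, ← TensorProduct.smul_tmul', hx, smul_zero]

theorem exists_isPrimeSubmodule_colon_eq_ker (K : Type*) [Field K] [Algebra R K]
    [Nontrivial (K ⊗[R] (M ⧸ N))] :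
    ∃ Q, N ≤ Q ∧ IsPrimeSubmodule Q ∧ Q.colon Set.univ = RingHom.ker (algebraMap R K) := by
  let f : M →ₗ[R] K ⊗[R] (M ⧸ N) := TensorProduct.mk R _ _ 1 ∘ₗ N.mkQ
  have hf : f ≠ 0 := fun hf ↦ tensorProduct_mk_one_ne_zero K <|
    LinearMap.cancel_right N.mkQ_surjective |>.1 hf
  refine ⟨LinearMap.ker f, ?_, isPrimeSubmodule_ker K hf, colon_ker K hf⟩
  exact N.ker_mkQ.ge.trans (LinearMap.ker_le_ker_comp _ _)

theorem nontrivial_residueField_tensorProduct_quotient [Module.Finite R M] {q : Ideal R}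
    [hq : q.IsPrime] (h : N.colon Set.univ ≤ q) :
    Nontrivial (q.ResidueField ⊗[R] (M ⧸ N)) := by
  refine (Module.mem_support_iff_nontrivial_residueField_tensorProduct ⟨q, hq⟩).1 ?_
  rw [Module.support_eq_zeroLocus, Submodule.annihilator_quotient]
  exact h

theorem exists_isPrimeSubmodule_colon_eq [Module.Finite R M] {q : Ideal R} [q.IsPrime]
    (h : N.colon Set.univ ≤ q) :
    ∃ Q, N ≤ Q ∧ IsPrimeSubmodule Q ∧ Q.colon Set.univ = q := by
  have := nontrivial_residueField_tensorProduct_quotient h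
  obtain ⟨Q, hNQ, hQ, hQq⟩ := exists_isPrimeSubmodule_colon_eq_ker (N := N) q.ResidueField
  exact ⟨Q, hNQ, hQ, hQq.trans q.ker_algebraMap_residueField⟩

theorem exists_isPrimeSubmodule_disjoint_colon [Module.Finite R M] (S : Submonoid R)
    (h : Disjoint (N.colon Set.univ : Set R) S) :
    ∃ Q, N ≤ Q ∧ IsPrimeSubmodule Q ∧ Disjoint (Q.colon Set.univ : Set R) S := by
  obtain ⟨q, _, hNq, hqS⟩ := Ideal.exists_le_prime_disjoint _ S h
  obtain ⟨Q, hNQ, hQ, rfl⟩ := exists_isPrimeSubmodule_colon_eq hNq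
  exact ⟨Q, hNQ, hQ, hqS⟩

theorem StronglyPrimeAt.exists_le_of_small (hP : StronglyPrimeAt.{_, _, w} P) {ι : Type*}
    [Small.{w} ι] (N : ι → Submodule R M) (h : ⨅ i, N i ≤ P) : ∃ i, N i ≤ P := by
  obtain ⟨j, hj⟩ := hP (Shrink.{w} ι) (fun j ↦ N ((equivShrink ι).symm j))
    ((equivShrink ι).symm.iInf_comp.trans_le h)
  exact ⟨_, hj⟩

theorem StronglyPrimeAt.le_or_le (hP : StronglyPrimeAt.{_, _, w} P) (h : N ⊓ Q ≤ P) :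
    N ≤ P ∨ Q ≤ P := by
  obtain ⟨b, hb⟩ := hP.exists_le_of_small (fun b : Bool ↦ cond b N Q) (by rwa [iInf_bool_eq])
  cases b
  exacts [.inr hb, .inl hb]

theorem StronglyPrimeAt.of_isLeast {L : Submodule R M} (hL : IsLeast {N | ¬ N ≤ P} L) :
    StronglyPrimeAt.{_, _, w} P := fun _ N hN ↦ by
  by_contra! h
  exact hL.1 ((le_iInf fun i ↦ hL.2 (h i)).trans hN)

theorem stronglyPrimeAt_iff_coprimelyStructuredAt (hP : IsCoatom P) :
    StronglyPrimeAt.{_, _, w} P ↔ CoprimelyStructuredAt.{_, _, w} P := by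
  refine forall₂_congr fun ι N ↦ ?_
  rw [← not_imp_not, not_exists]
  simp only [hP.not_le_iff_codisjoint, codisjoint_iff, sup_comm]

namespace StronglyZeroDimensional

variable [Module.Finite R M]

theorem exists_smul_top_le_smul_top_succ (hM : StronglyZeroDimensional.{w, _, _} R M)
    (a : ℕ → R) (ha : ∀ n, a n ^ 2 ∣ a (n + 1)) :
    ∃ n, a n • (⊤ : Submodule R M) ≤ a (n + 1) • ⊤ := by
  have hmono : ∀ m n, m ≤ n → a m ∣ a n :=
    Nat.rel_of_forall_rel_succ_of_le (· ∣ ·) fun n ↦ (dvd_pow_self _ two_ne_zero).trans (ha n)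
  let S : Submonoid R :=
    { carrier := {s | ∃ n, s ∣ a n}
      one_mem' := ⟨0, one_dvd _⟩
      mul_mem' := by
        rintro s t ⟨m, hs⟩ ⟨n, ht⟩
        refine ⟨max m n + 1, dvd_trans ?_ (ha _)⟩
        rw [sq]
        exact mul_dvd_mul (hs.trans (hmono _ _ (le_max_left m n)))
          (ht.trans (hmono _ _ (le_max_right m n))) }
  by_contra! h
  have hS : Disjoint ((⨅ n, a n • (⊤ : Submodule R M)).colon Set.univ : Set R) S := by
    refine Set.disjoint_left.2 fun s hs ⟨n, hn⟩ ↦ h n ?_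
    exact (smul_top_le_smul_top_of_dvd hn).trans
      ((mem_colon_univ_iff_smul_top_le.1 hs).trans (iInf_le _ (n + 1)))
  obtain ⟨Q, hNQ, hQ, hQS⟩ := exists_isPrimeSubmodule_disjoint_colon S hS
  obtain ⟨n, hn⟩ := (hM Q hQ).exists_le_of_small _ hNQ
  exact Set.disjoint_left.1 hQS (mem_colon_univ_iff_smul_top_le.2 hn) ⟨n, dvd_rfl⟩

theorem exists_mem_forall_smul_top_le (hM : StronglyZeroDimensional.{w, _, _} R M)
    (S : Submonoid R) : ∃ a ∈ S, ∀ b ∈ S, a • (⊤ : Submodule R M) ≤ b • ⊤ := by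
  by_contra! h
  have hS : ∀ a : S, ∃ b : S, ¬ (a : R) • (⊤ : Submodule R M) ≤ (b : R) • ⊤ := fun a ↦
    have ⟨b, hb, hab⟩ := h a a.2
    ⟨⟨b, hb⟩, hab⟩
  choose f hf using hS
  let g : ℕ → S := fun n ↦ (fun a ↦ a ^ 2 * f a)^[n] 1
  have hg (n : ℕ) : g (n + 1) = g n ^ 2 * f (g n) := Function.iterate_succ_apply' ..
  obtain ⟨n, hn⟩ := hM.exists_smul_top_le_smul_top_succ (fun n ↦ (g n : R)) fun n ↦ by
    simp [hg n]
  refine hf (g n) (hn.trans (smul_top_le_smul_top_of_dvd ?_))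
  simp [hg n]

theorem isMaximal_of_annihilator_le (hM : StronglyZeroDimensional.{w, _, _} R M)
    {p : Ideal R} [hp : p.IsPrime] (h : Module.annihilator R M ≤ p) : p.IsMaximal := by
  refine Ideal.isMaximal_iff.2 ⟨p.ne_top_iff_one.1 hp.ne_top, fun J s hpJ hsp hsJ ↦ ?_⟩
  obtain ⟨a, ⟨n, rfl⟩, ha⟩ := hM.exists_mem_forall_smul_top_le (Submonoid.powers s)
  have hle : s ^ n • (⊤ : Submodule R M) ≤ Ideal.span {s} • s ^ n • (⊤ : Submodule R M) := by
    rw [Submodule.ideal_span_singleton_smul, ← mul_smul, ← pow_succ']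
    exact ha _ ⟨n + 1, rfl⟩
  obtain ⟨r, hrs, hr⟩ := Submodule.exists_sub_one_mem_and_smul_eq_zero_of_fg_of_le_smul _ _
    (Module.Finite.fg_top.map _) hle
  have hrp : r ∈ p := by
    refine (hp.mem_or_mem (h ?_)).resolve_right fun h ↦ hsp (hp.mem_of_pow_mem n h)
    refine Module.mem_annihilator.2 fun x ↦ ?_
    rw [mul_smul]
    exact hr _ (Submodule.smul_mem_pointwise_smul _ _ _ trivial)
  rw [← sub_sub_cancel r 1]
  exact J.sub_mem (hpJ hrp) ((J.span_singleton_le_iff_mem.2 hsJ) hrs)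

theorem isMaximal_colon (hM : StronglyZeroDimensional.{w, _, _} R M)
    (hP : IsPrimeSubmodule P) : (P.colon Set.univ).IsMaximal :=
  have := hP.isPrime_colon
  hM.isMaximal_of_annihilator_le (annihilator_le_colon P _)

theorem zeroDimensionalModule (hM : StronglyZeroDimensional.{w, _, _} R M) :
    ZeroDimensionalModule R M := by
  refine fun P hP ↦ ⟨hP.1, fun L hPL ↦ by_contra fun hL ↦ ?_⟩
  have hmax := hM.isMaximal_colon hP
  have hcolon := colon_eq_of_isMaximal_colon hmax hPL.le hL
  have hLprime := isPrimeSubmodule_of_isMaximal_colon (hcolon ▸ hmax)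
  obtain ⟨y, hy⟩ : ∃ y, y ∉ L := by simpa [Submodule.eq_top_iff'] using hL
  have hinf : L ⊓ (P ⊔ R ∙ y) ≤ P := by
    rintro z ⟨hzL, hz⟩
    obtain ⟨p, hp, v, hv, rfl⟩ := Submodule.mem_sup.1 hz
    obtain ⟨c, rfl⟩ := Submodule.mem_span_singleton.1 hv
    have hcy : c • y ∈ L := (L.add_mem_iff_right (hPL.le hp)).1 hzL
    have hc : c ∈ L.colon Set.univ :=
      Submodule.mem_colon.2 fun x _ ↦ (hLprime.2 c y hcy).resolve_left hy x
    exact P.add_mem hp (Submodule.mem_colon.1 (hcolon.le hc) y trivial)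
  rcases (hM P hP).le_or_le hinf with hLP | hyP
  · exact hPL.not_ge hLP
  · exact hy (hPL.le (hyP (Submodule.mem_sup_right (Submodule.mem_span_singleton_self y))))

theorem le_of_colon_le (hM : StronglyZeroDimensional.{w, _, _} R M)
    (hP : IsPrimeSubmodule P) (h : N.colon Set.univ ≤ P.colon Set.univ) : N ≤ P := by
  have := hP.isPrime_colon
  obtain ⟨Q, hNQ, hQ, hQP⟩ := exists_isPrimeSubmodule_colon_eq h
  have hcolon : (P ⊓ Q).colon Set.univ = P.colon Set.univ := by
    rw [Submodule.inf_colon, hQP, inf_idem]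
  have hPQ : IsCoatom (P ⊓ Q) := hM.zeroDimensionalModule _
    (isPrimeSubmodule_of_isMaximal_colon (hcolon ▸ hM.isMaximal_colon hP))
  have hQ_eq : Q = P ⊓ Q := (hPQ.le_iff_eq hQ.1).1 inf_le_right
  exact hNQ.trans (hQ_eq.trans_le inf_le_left)

theorem exists_isLeast (hM : StronglyZeroDimensional.{w, _, _} R M)
    (hP : IsPrimeSubmodule P) : ∃ L, IsLeast {N | ¬ N ≤ P} L := by
  have := hP.isPrime_colon
  obtain ⟨a, ha, hmin⟩ := hM.exists_mem_forall_smul_top_le (P.colon Set.univ).primeCompl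
  refine ⟨a • ⊤, fun h ↦ ha (mem_colon_univ_iff_smul_top_le.2 h), fun N hN ↦ ?_⟩
  obtain ⟨r, hrN, hrP⟩ := SetLike.not_le_iff_exists.1 (mt (hM.le_of_colon_le hP) hN)
  exact (hmin r hrP).trans (mem_colon_univ_iff_smul_top_le.1 hrN)

theorem change_universe (hM : StronglyZeroDimensional.{w, _, _} R M) :
    StronglyZeroDimensional.{w', _, _} R M := fun _ hP ↦
  let ⟨_, hL⟩ := hM.exists_isLeast hP
  .of_isLeast hL

end StronglyZeroDimensional

end

/-- A finitely generated module is zero-dimensional and coprimely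
structured iff it is strongly 0-dimensional. -/
theorem zeroDim_coprimelyStructured_iff_stronglyZeroDimensional {R M : Type*} [CommRing R]
    [AddCommGroup M] [Module R M] [Module.Finite R M] :
    (ZeroDimensionalModule R M ∧ CoprimelyStructured R M) ↔
      StronglyZeroDimensional R M := by
  constructor
  · rintro ⟨hZ, hC⟩
    have hM : StronglyZeroDimensional R M := fun P hP ↦
      (stronglyPrimeAt_iff_coprimelyStructuredAt (hZ P hP)).2 (hC P hP)
    exact hM.change_universe
  · intro hM
    have hZ := hM.zeroDimensionalModule
    exact ⟨hZ, fun P hP ↦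
      (stronglyPrimeAt_iff_coprimelyStructuredAt (hZ P hP)).1 (hM.change_universe P hP)⟩
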